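/- Let K be a field of characteristic zero and let S be the K-algebra of sequences with values in K. Let R' ⊆ S be the K-subalgebra generated by the exponential sequences e(μ) for all μ ∈ K^*. Then the sequence δ ∈ S given by δ_n = n is transcendental over R'; that is, there is no relation ρ_0 δ^m + ρ_1 δ^{m−1} + ⋯ + ρ_m = 0 with m ≥ 1, coefficients ρ_j ∈ R', and ρ_0 ≠ 0. -/

import Mathlib

/-!
A polynomial sequence `a` is killed by an iterate of the difference operator, so `e(ξ) a` is a
generalized eigenvector of the shift for the eigenvalue `ξ`. Generalized eigenspaces are
independent, hence distinct exponential sequences are linearly independent over the algebra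
`R[δ]` of polynomial sequences. As they also span `R'`, the algebras `R'` and `R[δ]` are linearly
disjoint, so the powers of `δ`, being independent over `R`, stay independent over `R'`.
-/

open Polynomial fwdDiff
open scoped nonZeroDivisors

section Algebra

variable {R A : Type*}

theorem transcendental_iff_linearIndependent_pow [CommRing R] [Ring A] [Algebra R A] {x : A} :
    Transcendental R x ↔ LinearIndependent R fun n : ℕ => x ^ n := by
  have aeval_eq : (aeval x).toLinearMap =
      Finsupp.linearCombination R (fun n : ℕ => x ^ n) ∘ₗ (basisMonomials R).repr.toLinearMap :=
    (basisMonomials R).ext fun n => by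
      rw [LinearMap.comp_apply, LinearEquiv.coe_coe, Module.Basis.repr_self,
        Finsupp.linearCombination_single, one_smul, coe_basisMonomials, AlgHom.toLinearMap_apply,
        aeval_monomial, map_one, one_mul]
  rw [transcendental_iff_injective, ← AlgHom.coe_toLinearMap, aeval_eq, LinearMap.coe_comp,
    LinearEquiv.coe_coe, EquivLike.injective_comp, LinearIndependent]

theorem transcendental_of_linearDisjoint [CommRing R] [CommRing A] [Algebra R A]
    {B C : Subalgebra R A} [Module.Flat R B] (hBC : B.LinearDisjoint C) {x : A} (hxC : x ∈ C)
    (hx : Transcendental R x) : Transcendental B x := by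
  rw [transcendental_iff_linearIndependent_pow] at hx ⊢
  have powers_in_C : LinearIndependent R fun n : ℕ => (⟨x, hxC⟩ : C) ^ n :=
    .of_comp C.val.toLinearMap hx
  exact hBC.linearIndependent_right_of_flat powers_in_C

theorem transcendental_of_linearIndependent_adjoin_of_span_eq [CommRing R] [CommRing A]
    [Algebra R A] {B : Subalgebra R A} {ι : Type*} {v : ι → A} {x : A}
    (hv : LinearIndependent (Algebra.adjoin R {x}) v)
    (hB : Subalgebra.toSubmodule B = Submodule.span R (Set.range v)) (hx : Transcendental R x) :
    Transcendental B x := by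
  have hvR : LinearIndependent R v := by
    have : Algebra.Transcendental R (Algebra.adjoin R {x}) :=
      ⟨⟨x, Algebra.self_mem_adjoin_singleton R x⟩,
        Subalgebra.transcendental_iff_transcendental_val.mpr hx⟩
    have : FaithfulSMul R (Algebra.adjoin R {x}) :=
      (faithfulSMul_iff_algebraMap_injective _ _).mpr Algebra.injective_of_transcendental
    exact hv.restrict_scalars' R
  let basis : Module.Basis ι R B := (Module.Basis.span hvR).map (LinearEquiv.ofEq _ _ hB.symm)
  have hbasis : ⇑B.val ∘ basis = v := by
    funext i
    exact congrArg Subtype.val (Module.Basis.span_apply hvR i)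
  have : Module.Free R B := .of_basis basis
  have disjoint : B.LinearDisjoint (Algebra.adjoin R {x}) :=
    .of_basis_left _ _ basis (hbasis.symm ▸ hv)
  exact transcendental_of_linearDisjoint disjoint (Algebra.self_mem_adjoin_singleton R x) hx

theorem toSubmodule_adjoin_range_monoidHom {M : Type*} [Monoid M] [CommSemiring R] [Semiring A]
    [Algebra R A] (f : M →* A) :
    Subalgebra.toSubmodule (Algebra.adjoin R (Set.range f)) = Submodule.span R (Set.range f) := by
  rw [Algebra.adjoin_eq_span, ← MonoidHom.coe_mrange, Submonoid.closure_eq]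

end Algebra

section Sequences

variable (R : Type*) [CommRing R]

/-- The shift operator `(a_1, a_2, …) ↦ (a_2, a_3, …)` on sequences. -/
def seqShift : Module.End R (ℕ → R) :=
  LinearMap.funLeft R R Nat.succ

/-- The sequence `δ_n = n`, `n ≥ 1`; position `n` records the term `δ_{n+1}`. -/
def indexSeq : ℕ → R :=
  fun n => n + 1

/-- The exponential sequence `e(ξ)_n = ξ ^ n`, `n ≥ 1`, multiplicative in `ξ`; position `n` records
the term `e(ξ)_{n+1}`. -/
def expSeq : R →* (ℕ → R) :=
  MonoidHom.pi fun n => powMonoidHom (n + 1)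

variable {R}

theorem expSeq_apply (ξ : R) (n : ℕ) : expSeq R ξ n = ξ ^ (n + 1) :=
  rfl

theorem seqShift_sub_smul_one_expSeq_mul (ξ : R) (a : ℕ → R) :
    (seqShift R - ξ • 1) (expSeq R ξ * a) = ξ • (expSeq R ξ * Δ_[1] a) := by
  funext n
  simp only [seqShift, LinearMap.sub_apply, LinearMap.smul_apply, Module.End.one_apply,
    Pi.sub_apply, Pi.smul_apply, Pi.mul_apply, LinearMap.funLeft_apply, Nat.succ_eq_add_one,
    expSeq_apply, smul_eq_mul, fwdDiff]
  ring

theorem seqShift_sub_smul_one_pow_expSeq_mul (ξ : R) (a : ℕ → R) (m : ℕ) :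
    ((seqShift R - ξ • 1) ^ m) (expSeq R ξ * a) = ξ ^ m • (expSeq R ξ * Δ_[1] ^[m] a) := by
  induction m generalizing a with
  | zero => simp
  | succ m ih =>
    rw [pow_succ, Module.End.mul_apply, seqShift_sub_smul_one_expSeq_mul, map_smul, ih, smul_smul,
      ← pow_succ', Function.iterate_succ_apply]

theorem fwdDiff_iter_aeval_indexSeq (P : R[X]) :
    Δ_[1] ^[P.natDegree + 1] (aeval (indexSeq R) P) = 0 := by
  funext n
  have h := congrFun P.fwdDiff_iter_degree_add_one_eq_zero ((n : R) + 1)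
  rw [fwdDiff_iter_eq_sum_shift] at h ⊢
  simpa [indexSeq, add_right_comm] using h

theorem expSeq_mul_mem_maxGenEigenspace (ξ : R) {a : ℕ → R}
    (ha : a ∈ Algebra.adjoin R {indexSeq R}) :
    expSeq R ξ * a ∈ (seqShift R).maxGenEigenspace ξ := by
  rw [Algebra.adjoin_singleton_eq_range_aeval] at ha
  obtain ⟨P, rfl⟩ := ha
  refine (Module.End.mem_maxGenEigenspace _ _ _).mpr ⟨P.natDegree + 1, ?_⟩
  simp only [seqShift_sub_smul_one_pow_expSeq_mul, AlgHom.toRingHom_eq_coe, RingHom.coe_coe,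
    fwdDiff_iter_aeval_indexSeq, mul_zero, smul_zero]

theorem transcendental_indexSeq [IsDomain R] [CharZero R] : Transcendental R (indexSeq R) := by
  refine transcendental_iff.mpr fun P hP => P.eq_zero_of_infinite_isRoot ?_
  have infinite_range : (Set.range fun n : ℕ => (n : R) + 1).Infinite :=
    Set.infinite_range_of_injective fun m n hmn => by simpa using hmn
  refine infinite_range.mono ?_
  rintro _ ⟨n, rfl⟩
  simpa [indexSeq] using congrFun hP n

theorem linearIndependent_expSeq [IsDomain R] :
    LinearIndependent (Algebra.adjoin R {indexSeq R}) fun ξ : R⁰ => expSeq R ξ := by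
  have independent : iSupIndep fun ξ : R⁰ => (seqShift R).maxGenEigenspace (ξ : R) :=
    (seqShift R).independent_maxGenEigenspace.comp Subtype.val_injective
  rw [iSupIndep_iff_finsetSum_eq_zero_imp_eq_zero] at independent
  refine linearIndependent_iff'.mpr fun s a hsum ξ hξ => ?_
  have term_eq_zero : expSeq R ξ * (a ξ : ℕ → R) = 0 :=
    independent s _ (fun ζ _ => expSeq_mul_mem_maxGenEigenspace (ζ : R) (a ζ).2)
      (by simpa only [Subalgebra.smul_def, smul_eq_mul, mul_comm] using hsum) ξ hξ
  ext n
  simpa [expSeq_apply, nonZeroDivisors.coe_ne_zero] using congrFun term_eq_zero n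

end Sequences

theorem delta_transcendental_over_exponentials_general
    {R : Type*} [CommRing R] [IsDomain R] [CharZero R]
    (R' : Subalgebra R (ℕ → R))
    (hR' : R' = Algebra.adjoin R
      {s : ℕ → R | ∃ ξ : R, ξ ≠ 0 ∧ s = fun n => ξ ^ (n + 1)}) :
    Transcendental ↥R' (fun n : ℕ => ((n : R) + 1)) := by
  let e : R⁰ →* (ℕ → R) := (expSeq R).comp R⁰.subtype
  have generators_eq : {s : ℕ → R | ∃ ξ : R, ξ ≠ 0 ∧ s = fun n => ξ ^ (n + 1)} = Set.range e := by
    ext s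
    constructor
    · rintro ⟨ξ, hξ, rfl⟩
      exact ⟨⟨ξ, mem_nonZeroDivisors_of_ne_zero hξ⟩, rfl⟩
    · rintro ⟨ξ, rfl⟩
      exact ⟨ξ, nonZeroDivisors.coe_ne_zero ξ, rfl⟩
  rw [generators_eq] at hR'
  subst hR'
  exact transcendental_of_linearIndependent_adjoin_of_span_eq linearIndependent_expSeq
    (toSubmodule_adjoin_range_monoidHom e) transcendental_indexSeq

/-- In the `K`-algebra `S = ℕ → K` of sequences `(a_1, a_2, …)` (position `n` records
the term `a_{n+1}`), over a field `K` of characteristic zero, the sequence `δ` with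
`δ_n = n` is transcendental over the subalgebra `R'` generated by all exponential
sequences `e(ξ)`, `ξ ∈ K^*`. -/
theorem delta_transcendental_over_exponentials
    {K : Type*} [Field K] [CharZero K]
    (R' : Subalgebra K (ℕ → K))
    (hR' : R' = Algebra.adjoin K
      {s : ℕ → K | ∃ ξ : K, ξ ≠ 0 ∧ s = fun n => ξ ^ (n + 1)}) :
    Transcendental ↥R' (fun n : ℕ => ((n : K) + 1)) :=
  delta_transcendental_over_exponentials_general R' hR'
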